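/- The sum over k ≥ 1 of (2^{2k+1} / (3^{3k}(3k+1))) · C(3k+1, k) equals 1. -/

import Mathlib

open Finset Filter Topology

/-- The number `C(3k+1, k) / (3k+1)` of ternary trees with `k` internal nodes, as a real number. -/
noncomputable def ternaryCatalan (k : ℕ) : ℝ :=
  (Nat.choose (3 * k + 1) k : ℝ) / (3 * k + 1)

lemma ternaryCatalan_zero : ternaryCatalan 0 = 1 := by simp [ternaryCatalan]

lemma ternaryCatalan_nonneg (k : ℕ) : 0 ≤ ternaryCatalan k := by
  unfold ternaryCatalan; positivity

lemma ternaryCatalan_eq_factorial (k : ℕ) :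
    ternaryCatalan k = ((3 * k).factorial : ℝ) / (k.factorial * (2 * k + 1).factorial) := by
  rw [ternaryCatalan, Nat.cast_choose ℝ (by lia : k ≤ 3 * k + 1),
    show 3 * k + 1 - k = 2 * k + 1 by lia, Nat.factorial_succ (3 * k)]
  have : (3 * (k : ℝ) + 1) ≠ 0 := by positivity
  push_cast
  field_simp

lemma ternaryCatalan_succ (k : ℕ) :
    ternaryCatalan (k + 1) * ((k + 1) * (2 * k + 2) * (2 * k + 3)) =
      ternaryCatalan k * ((3 * k + 1) * (3 * k + 2) * (3 * k + 3)) := by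
  rw [ternaryCatalan_eq_factorial, ternaryCatalan_eq_factorial,
    show 3 * (k + 1) = 3 * k + 1 + 1 + 1 by ring, show 2 * (k + 1) + 1 = 2 * k + 1 + 1 + 1 by ring]
  simp only [Nat.factorial_succ (3 * k + 1 + 1), Nat.factorial_succ (3 * k + 1),
    Nat.factorial_succ (3 * k), Nat.factorial_succ k, Nat.factorial_succ (2 * k + 1 + 1),
    Nat.factorial_succ (2 * k + 1)]
  have h1 := Nat.cast_ne_zero (R := ℝ).2 (Nat.factorial_ne_zero k)
  have h2 := Nat.cast_ne_zero (R := ℝ).2 (Nat.factorial_ne_zero (2 * k + 1))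
  push_cast
  have h3 : (2 * (k : ℝ) + 1 + 1) ≠ 0 := by positivity
  have h4 : (2 * (k : ℝ) + 1 + 1 + 1) ≠ 0 := by positivity
  have h5 : ((k : ℝ) + 1) ≠ 0 := by positivity
  field_simp
  ring

lemma ternaryCatalan_mul_pow_le_one (k : ℕ) : ternaryCatalan k * (4 / 27) ^ k ≤ 1 := by
  induction k with
  | zero => simp [ternaryCatalan_zero]
  | succ k ih =>
    refine le_trans ?_ ih
    have hpos : (0 : ℝ) < (k + 1) * (2 * k + 2) * (2 * k + 3) := by positivity
    refine le_of_mul_le_mul_right ?_ hpos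
    have h0 : 0 ≤ ternaryCatalan k * (4 / 27) ^ k :=
      mul_nonneg (ternaryCatalan_nonneg k) (by positivity)
    calc ternaryCatalan (k + 1) * (4 / 27) ^ (k + 1) * ((k + 1) * (2 * k + 2) * (2 * k + 3))
        = (ternaryCatalan k * (4 / 27) ^ k) *
            (4 / 27 * ((3 * k + 1) * (3 * k + 2) * (3 * k + 3))) := by
          linear_combination (4 / 27) ^ (k + 1) * ternaryCatalan_succ k
      _ ≤ _ := by
          refine mul_le_mul_of_nonneg_left ?_ h0
          have hk : (0 : ℝ) ≤ k := k.cast_nonneg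
          nlinarith [mul_nonneg hk hk]

lemma summable_ternaryCatalan_mul_pow {x : ℝ} (hx : |x| < 4 / 27) :
    Summable fun k => ternaryCatalan k * x ^ k := by
  have hr : |x| / (4 / 27) < 1 := by rw [div_lt_one (by norm_num)]; exact hx
  refine Summable.of_norm_bounded (summable_geometric_of_lt_one (by positivity) hr) fun k => ?_
  rw [norm_mul, norm_pow, Real.norm_eq_abs, Real.norm_eq_abs,
    abs_of_nonneg (ternaryCatalan_nonneg k)]
  calc ternaryCatalan k * |x| ^ k
      = ternaryCatalan k * (4 / 27) ^ k * (|x| / (4 / 27)) ^ k := by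
        rw [mul_assoc, ← mul_pow]; congr 2; field_simp
    _ ≤ 1 * (|x| / (4 / 27)) ^ k :=
        mul_le_mul_of_nonneg_right (ternaryCatalan_mul_pow_le_one k) (by positivity)
    _ = _ := one_mul _

lemma analyticOnNhd_tsum_ternaryCatalan :
    AnalyticOnNhd ℝ (fun x : ℝ => ∑' k, ternaryCatalan k * x ^ k) (Metric.ball 0 (4 / 27)) := by
  set P := FormalMultilinearSeries.ofScalars ℝ ternaryCatalan
  have hrad : (((4 / 27 : NNReal)) : ENNReal) ≤ P.radius := by
    refine P.le_radius_of_bound 1 fun n => ?_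
    rw [FormalMultilinearSeries.ofScalars_norm, Real.norm_eq_abs,
      abs_of_nonneg (ternaryCatalan_nonneg n)]
    simpa using ternaryCatalan_mul_pow_le_one n
  have hpos : 0 < P.radius := lt_of_lt_of_le (by simp) hrad
  have hsum : P.sum = fun x : ℝ => ∑' k, ternaryCatalan k * x ^ k := by
    funext x
    exact FormalMultilinearSeries.ofScalars_sum_eq ternaryCatalan x
  have han := (P.hasFPowerSeriesOnBall hpos).analyticOnNhd
  rw [hsum] at han
  refine han.mono ?_
  intro x hx
  rw [← NNReal.coe_ofNat, ← NNReal.coe_ofNat, ← NNReal.coe_div, ← Metric.eball_coe] at hx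
  exact Metric.eball_subset_eball hrad hx

lemma factorial_mul_choose_mul_choose {m k : ℕ} (hk : k ≤ m + 1) :
    (m + 1).factorial * ((3 * k + 1).choose k * (2 * k + 1).choose (m + 1 - k)) =
      (3 * k + 1) * ((3 * k).descFactorial m * (m + 1).choose k) := by
  have h := Nat.choose_mul (n := 3 * k + 1) hk
  rw [show 3 * k + 1 - k = 2 * k + 1 by lia] at h
  rw [← h, ← mul_assoc, ← Nat.descFactorial_eq_factorial_mul_choose,
    Nat.succ_descFactorial_succ, mul_assoc]

/-- An alternating sum that vanishes as an `(m+1)`-st difference of a polynomial of degree `m`. -/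
lemma sum_neg_one_pow_mul_ternaryCatalan_mul_choose (m : ℕ) :
    ∑ k ∈ range (m + 2),
      (-1 : ℝ) ^ (m + 1 - k) * (ternaryCatalan k * (2 * k + 1).choose (m + 1 - k)) = 0 := by
  set Q : Polynomial ℝ := (descPochhammer ℝ m).comp (Polynomial.C 3 * Polynomial.X)
  have hQ : Q.natDegree < m + 1 := by
    rw [Nat.lt_succ_iff]
    refine Polynomial.natDegree_comp_le.trans ?_
    rw [descPochhammer_natDegree, Polynomial.natDegree_C_mul_X _ (by norm_num), mul_one]
  have h := congrFun (Polynomial.fwdDiff_iter_eq_zero_of_degree_lt hQ) 0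
  rw [fwdDiff_iter_eq_sum_shift] at h
  have hfac : ((m + 1).factorial : ℝ) ≠ 0 := Nat.cast_ne_zero.2 (Nat.factorial_ne_zero _)
  refine (mul_eq_zero_iff_left hfac).1 ?_
  rw [mul_sum]
  refine Eq.trans (sum_congr rfl fun k hk => ?_) h
  have hk' : k ≤ m + 1 := by simpa [Nat.lt_succ_iff] using hk
  have hc := congrArg (Nat.cast (R := ℝ)) (factorial_mul_choose_mul_choose hk')
  have heval : Q.eval (0 + k • (1 : ℝ)) = ((3 * k).descFactorial m : ℝ) := by
    rw [← descPochhammer_eval_eq_descFactorial]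
    simp [Q]
  rw [heval, zsmul_eq_mul, ternaryCatalan]
  push_cast at hc ⊢
  have h3 : (3 * (k : ℝ) + 1) ≠ 0 := by positivity
  field_simp
  linear_combination hc

lemma hasSum_choose_mul_pow (n : ℕ) (x : ℝ) :
    HasSum (fun j => (n.choose j : ℝ) * x ^ j) ((1 + x) ^ n) := by
  have h : (1 + x) ^ n = ∑ j ∈ range (n + 1), (n.choose j : ℝ) * x ^ j := by
    rw [add_comm, add_pow]
    exact sum_congr rfl fun j _ => by ring
  rw [h]
  refine hasSum_sum_of_ne_finset_zero fun j hj => ?_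
  rw [Nat.choose_eq_zero_of_lt (by simpa using hj)]
  simp

lemma tsum_ternaryCatalan_of_abs_lt {p : ℝ} (hp : |p| < 1 / 10) :
    (1 - p) * ∑' k, ternaryCatalan k * (p * (1 - p) ^ 2) ^ k = 1 := by
  set F : ℕ × ℕ → ℝ := fun x =>
    ternaryCatalan x.1 * p ^ x.1 * (((2 * x.1 + 1).choose x.2 : ℝ) * (-p) ^ x.2) with hF
  have hrow (k : ℕ) : HasSum (fun j => F (k, j))
      ((1 - p) * (ternaryCatalan k * (p * (1 - p) ^ 2) ^ k)) := by
    convert! (hasSum_choose_mul_pow (2 * k + 1) (-p)).mul_left (ternaryCatalan k * p ^ k) using 1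
    rw [← sub_eq_add_neg, mul_pow, ← pow_mul]; ring
  have hrow_norm (k : ℕ) : HasSum (fun j => ‖F (k, j)‖)
      ((1 + |p|) * (ternaryCatalan k * (|p| * (1 + |p|) ^ 2) ^ k)) := by
    convert! (hasSum_choose_mul_pow (2 * k + 1) |p|).mul_left (ternaryCatalan k * |p| ^ k) using 1
    · funext j
      simp [hF, abs_of_nonneg (ternaryCatalan_nonneg k)]
    · rw [mul_pow, ← pow_mul]; ring
  have hFs : Summable F := by
    refine Summable.of_norm ((summable_prod_of_nonneg fun _ => norm_nonneg _).2
      ⟨fun k => (hrow_norm k).summable, ?_⟩)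
    simp_rw [fun k => (hrow_norm k).tsum_eq]
    refine (summable_ternaryCatalan_mul_pow ?_).mul_left _
    have h0 := abs_nonneg p
    rw [abs_of_nonneg (by positivity)]
    nlinarith [mul_nonneg h0 h0]
  have hdiag (n : ℕ) : ∑ x ∈ antidiagonal n, F x = if n = 0 then 1 else 0 := by
    rcases n with _ | m
    · simp [hF, ternaryCatalan_zero]
    · rw [Nat.sum_antidiagonal_eq_sum_range_succ_mk, if_neg m.succ_ne_zero,
        ← mul_zero (p ^ (m + 1)), ← sum_neg_one_pow_mul_ternaryCatalan_mul_choose m, mul_sum]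
      refine sum_congr rfl fun k hk => ?_
      have hk' : k ≤ m + 1 := by simpa [Nat.lt_succ_iff] using hk
      have hpow : p ^ (m + 1) = p ^ k * p ^ (m + 1 - k) := by
        rw [← pow_add, Nat.add_sub_cancel' hk']
      simp only [hF]
      rw [hpow, neg_pow p]
      ring
  calc (1 - p) * ∑' k, ternaryCatalan k * (p * (1 - p) ^ 2) ^ k
      = ∑' k, ∑' j, F (k, j) := by
        rw [← tsum_mul_left]
        exact tsum_congr fun k => ((hrow k).tsum_eq).symm
    _ = ∑' x, F x := (hFs.tsum_prod' fun k => (hrow k).summable).symm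
    _ = ∑' n, ∑ x ∈ antidiagonal n, F x := by
        rw [← HasAntidiagonal.sigmaAntidiagonalEquivProd.tsum_eq F]
        refine (((HasAntidiagonal.sigmaAntidiagonalEquivProd.summable_iff (f := F)).2
          hFs).tsum_sigma' fun n => (hasSum_fintype _).summable).trans ?_
        refine tsum_congr fun n => ?_
        rw [tsum_fintype]
        exact Finset.sum_coe_sort (antidiagonal n) F
    _ = 1 := by simp_rw [hdiag]; exact tsum_ite_eq 0 _

lemma abs_mul_one_sub_sq_lt {p : ℝ} (h0 : -(1 / 10) < p) (h1 : p < 1 / 3) :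
    |p * (1 - p) ^ 2| < 4 / 27 := by
  rw [abs_lt]
  constructor
  · rcases le_or_gt 0 p with h | h
    · have : 0 ≤ p * (1 - p) ^ 2 := by positivity
      linarith
    · nlinarith [mul_pos (by linarith : 0 < p + 1 / 10) (by linarith : 0 < -p), sq_nonneg p,
        mul_pos (mul_pos (by linarith : 0 < p + 1 / 10) (by linarith : 0 < -p))
          (by linarith : 0 < -p)]
  · have : 0 < (1 / 3 - p) ^ 2 * (4 / 3 - p) :=
      mul_pos (pow_pos (by linarith) 2) (by linarith)
    nlinarith

lemma tsum_ternaryCatalan_mul_one_sub_sq {p : ℝ} (h0 : 0 ≤ p) (h1 : p < 1 / 3) :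
    (1 - p) * ∑' k, ternaryCatalan k * (p * (1 - p) ^ 2) ^ k = 1 := by
  set U := Set.Ioo (-(1 / 10) : ℝ) (1 / 3)
  have hinner : AnalyticOnNhd ℝ (fun p : ℝ => p * (1 - p) ^ 2) U := fun x _ => by fun_prop
  have hmaps : Set.MapsTo (fun p : ℝ => p * (1 - p) ^ 2) U (Metric.ball 0 (4 / 27)) :=
      fun x hx => by simpa using abs_mul_one_sub_sq_lt hx.1 hx.2
  have han : AnalyticOnNhd ℝ
      (fun p : ℝ => (1 - p) * ∑' k, ternaryCatalan k * (p * (1 - p) ^ 2) ^ k) U :=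
    AnalyticOnNhd.mul (fun x _ => by fun_prop)
      (analyticOnNhd_tsum_ternaryCatalan.comp hinner hmaps)
  refine han.eqOn_of_preconnected_of_eventuallyEq (analyticOnNhd_const (v := (1 : ℝ)))
    isPreconnected_Ioo (z₀ := 0) ⟨by norm_num, by norm_num⟩ ?_ ⟨by linarith, h1⟩
  filter_upwards [Metric.ball_mem_nhds (0 : ℝ) (by norm_num : (0 : ℝ) < 1 / 10)] with x hx
  exact tsum_ternaryCatalan_of_abs_lt (by simpa using hx)

/-- The generating function of ternary trees at its radius of convergence. -/
lemma hasSum_ternaryCatalan : HasSum (fun k => ternaryCatalan k * (4 / 27) ^ k) (3 / 2) := by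
  have hlim : Tendsto (fun p : ℝ => p * (1 - p) ^ 2) (𝓝[<] (1 / 3)) (𝓝 (4 / 27)) := by
    have : ContinuousAt (fun p : ℝ => p * (1 - p) ^ 2) (1 / 3) := by fun_prop
    have h := this.tendsto.mono_left (nhdsWithin_le_nhds (s := Set.Iio (1 / 3)))
    norm_num at h ⊢
    exact h
  have hnear : ∀ᶠ p : ℝ in 𝓝[<] (1 / 3), 0 < p ∧ p < 1 / 3 :=
    Ioo_mem_nhdsLT (by norm_num)
  have hval {p : ℝ} (hp : 0 < p ∧ p < 1 / 3) :
      ∑' k, ternaryCatalan k * (p * (1 - p) ^ 2) ^ k = 1 / (1 - p) := by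
    rw [eq_div_iff (by linarith [hp.2]), mul_comm]
    exact tsum_ternaryCatalan_mul_one_sub_sq hp.1.le hp.2
  have hsummable {p : ℝ} (hp : 0 < p ∧ p < 1 / 3) :=
    summable_ternaryCatalan_mul_pow (abs_mul_one_sub_sq_lt (by linarith [hp.1]) hp.2)
  have hnonneg (k : ℕ) : 0 ≤ ternaryCatalan k * (4 / 27) ^ k :=
    mul_nonneg (ternaryCatalan_nonneg k) (by positivity)
  have hupper (s : Finset ℕ) : ∑ k ∈ s, ternaryCatalan k * (4 / 27) ^ k ≤ 3 / 2 := by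
    refine le_of_tendsto (tendsto_finsetSum s fun k _ => (hlim.pow k).const_mul _) ?_
    filter_upwards [hnear] with p hp
    refine ((hsummable hp).sum_le_tsum s fun k _ => ?_).trans ?_
    · have := hp.1
      exact mul_nonneg (ternaryCatalan_nonneg k) (by positivity)
    · rw [hval hp, div_le_iff₀ (by linarith [hp.2])]
      linarith [hp.2]
  have hs := summable_of_sum_le hnonneg hupper
  have hlower : 3 / 2 ≤ ∑' k, ternaryCatalan k * (4 / 27) ^ k := by
    have hlim' : Tendsto (fun p : ℝ => 1 / (1 - p)) (𝓝[<] (1 / 3)) (𝓝 (3 / 2)) := by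
      have : ContinuousAt (fun p : ℝ => 1 / (1 - p)) (1 / 3) :=
        ContinuousAt.div (by fun_prop) (by fun_prop) (by norm_num)
      have h := this.tendsto.mono_left (nhdsWithin_le_nhds (s := Set.Iio (1 / 3)))
      norm_num at h ⊢
      exact h
    refine le_of_tendsto hlim' ?_
    filter_upwards [hnear] with p hp
    rw [← hval hp]
    refine (hsummable hp).tsum_le_tsum (fun k => ?_) hs
    have hz := (abs_lt.1 (abs_mul_one_sub_sq_lt (by linarith [hp.1]) hp.2)).2.le
    have := hp.1
    exact mul_le_mul_of_nonneg_left (pow_le_pow_left₀ (by positivity) hz k)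
      (ternaryCatalan_nonneg k)
  rw [le_antisymm hlower (hs.tsum_le_of_sum_le hupper)]
  exact hs.hasSum

/-- The sum over `k ≥ 1` of `(2^{2k+1}/(3^{3k}(3k+1)))·C(3k+1,k)` equals 1. -/
theorem fringe_size_law_sums_to_one :
    (∑' k : ℕ, (2 : ℝ) ^ (2 * (k + 1) + 1) / (3 ^ (3 * (k + 1)) * (3 * (k + 1) + 1)) *
      (Nat.choose (3 * (k + 1) + 1) (k + 1) : ℝ)) = 1 := by
  have h := ((hasSum_nat_add_iff' 1).2 hasSum_ternaryCatalan).mul_left 2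
  simp only [sum_range_one, ternaryCatalan_zero, pow_zero] at h
  have hterm (k : ℕ) : (2 : ℝ) ^ (2 * (k + 1) + 1) / (3 ^ (3 * (k + 1)) * (3 * (k + 1) + 1)) *
      (Nat.choose (3 * (k + 1) + 1) (k + 1) : ℝ) =
      2 * (ternaryCatalan (k + 1) * (4 / 27) ^ (k + 1)) := by
    rw [ternaryCatalan, div_pow, pow_succ, pow_mul, pow_mul]
    norm_num
    field_simp
  simp_rw [hterm]
  rw [h.tsum_eq]
  norm_num
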